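/- For every η ∈ ℂ with η ∉ (1/2)ℤ, there is an isomorphism of Ū-modules V_η ⊗ V_η ≅ ⊕_{i=0}^{r−1} V_{2η−r+2i+1}; in particular V_η ⊗ V_η is semisimple and multiplicity free. -/

import Mathlib

noncomputable section

open scoped TensorProduct

namespace Unrolled

/-- `q^z = exp(π √-1 z / r)`. -/
def qc (r : ℕ) (z : ℂ) : ℂ := Complex.exp (Real.pi * Complex.I * z / r)

/-- `{z} = q^z - q^{-z}`. -/
def qbrk (r : ℕ) (z : ℂ) : ℂ := qc r z - qc r (-z)

/-- `[z] = {z}/{1}`. -/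
def qint (r : ℕ) (z : ℂ) : ℂ := qbrk r z / qbrk r 1

/-- `{n}! = ∏_{i=1}^n {i}`. -/
def qbrkFact (r n : ℕ) : ℂ := ∏ i ∈ Finset.range n, qbrk r ((i : ℂ) + 1)

/-- `[n]! = ∏_{i=1}^n [i]`. -/
def qintFact (r n : ℕ) : ℂ := ∏ i ∈ Finset.range n, qint r ((i : ℂ) + 1)

/-- The data of five operators `K, K⁻¹, H, E, F` on a complex vector space. -/
structure Ops (V : Type) [AddCommGroup V] [Module ℂ V] where
  K : Module.End ℂ V
  Kinv : Module.End ℂ V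
  H : Module.End ℂ V
  E : Module.End ℂ V
  F : Module.End ℂ V

/-- A module over the restricted unrolled quantum group `Ū = Ū_q^H(sl₂(ℂ))`:
five operators satisfying the defining relations of `Ū`. -/
structure Rep (r : ℕ) (V : Type) [AddCommGroup V] [Module ℂ V] extends Ops V where
  rel_KKinv : K * Kinv = 1
  rel_KinvK : Kinv * K = 1
  rel_HK : H * K = K * H
  rel_HE : H * E - E * H = (2 : ℂ) • E
  rel_HF : H * F - F * H = (-2 : ℂ) • F
  rel_KE : K * E = qc r 2 • (E * K)
  rel_KF : K * F = qc r (-2) • (F * K)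
  rel_EF : E * F - F * E = (qbrk r 1)⁻¹ • (K - Kinv)
  rel_Er : E ^ r = 0
  rel_Fr : F ^ r = 0

variable {V W U : Type} [AddCommGroup V] [Module ℂ V] [AddCommGroup W] [Module ℂ W]
  [AddCommGroup U] [Module ℂ U]

/-- A `Ū`-submodule: a subspace invariant under the five operators. -/
def Ops.Invariant (A : Ops V) (p : Submodule ℂ V) : Prop :=
  (∀ v ∈ p, A.K v ∈ p) ∧ (∀ v ∈ p, A.Kinv v ∈ p) ∧ (∀ v ∈ p, A.H v ∈ p) ∧
    (∀ v ∈ p, A.E v ∈ p) ∧ (∀ v ∈ p, A.F v ∈ p)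

/-- A simple `Ū`-module: nonzero, with no nonzero proper invariant subspace. -/
def Ops.IsSimple (A : Ops V) : Prop :=
  (∃ v : V, v ≠ 0) ∧ ∀ p : Submodule ℂ V, A.Invariant p → p = ⊥ ∨ p = ⊤

/-- A weight module: finite dimensional, a direct sum of `H`-eigenspaces, on which `K`
acts by `q^μ` on the `H`-eigenspace of eigenvalue `μ`. -/
structure IsWeight (r : ℕ) {V : Type} [AddCommGroup V] [Module ℂ V] (A : Ops V) : Prop where
  finDim : FiniteDimensional ℂ V
  sup_eigenspaces : (⨆ μ : ℂ, Module.End.eigenspace A.H μ) = ⊤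
  K_apply : ∀ (μ : ℂ), ∀ v ∈ Module.End.eigenspace A.H μ, A.K v = qc r μ • v

/-- A `Ū`-linear map. -/
def IsEquivariant (A : Ops V) (B : Ops W) (f : V →ₗ[ℂ] W) : Prop :=
  (∀ v, f (A.K v) = B.K (f v)) ∧ (∀ v, f (A.Kinv v) = B.Kinv (f v)) ∧
    (∀ v, f (A.H v) = B.H (f v)) ∧ (∀ v, f (A.E v) = B.E (f v)) ∧
    (∀ v, f (A.F v) = B.F (f v))

/-- Isomorphism of `Ū`-modules. -/
def OpsIso (A : Ops V) (B : Ops W) : Prop :=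
  ∃ e : V ≃ₗ[ℂ] W, IsEquivariant A B (e : V →ₗ[ℂ] W)

/-- The weight `α + r - 1 - 2i` of the basis vector `v_i` of the Verma module `V_α`. -/
def wt (r : ℕ) (α : ℂ) (i : ℕ) : ℂ := α + r - 1 - 2 * i

/-- The coefficient `{i}{i-α}/{1}²` occurring in `E v_i`. -/
def cE (r : ℕ) (α : ℂ) (i : ℕ) : ℂ := qbrk r i * qbrk r ((i : ℂ) - α) / qbrk r 1 ^ 2

/-- The Verma module `V_α` of highest weight `α + r - 1`, realized on `Fin r → ℂ`
with basis `v_0, …, v_{r-1}`. -/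
def vermaOps (r : ℕ) (α : ℂ) : Ops (Fin r → ℂ) where
  K := (Matrix.diagonal fun i : Fin r => qc r (wt r α (i : ℕ))).mulVecLin
  Kinv := (Matrix.diagonal fun i : Fin r => qc r (-wt r α (i : ℕ))).mulVecLin
  H := (Matrix.diagonal fun i : Fin r => wt r α (i : ℕ)).mulVecLin
  E := (Matrix.of fun i j : Fin r =>
    if (j : ℕ) = (i : ℕ) + 1 then cE r α (j : ℕ) else 0).mulVecLin
  F := (Matrix.of fun i j : Fin r =>
    if (i : ℕ) = (j : ℕ) + 1 then (1 : ℂ) else 0).mulVecLin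

/-- `α_{l,n} = (l-1)r + n + 1`, so that `S_n^{lr}` is a quotient of `V_{α_{l,n}}`. -/
def aln (r : ℕ) (l : ℤ) (n : ℕ) : ℂ := ((l : ℂ) - 1) * r + n + 1

/-- The simple module `S_n^{lr}` of highest weight `lr + n` and dimension `n+1`,
realized on `Fin (n+1) → ℂ`. -/
def smodOps (r : ℕ) (l : ℤ) (n : ℕ) : Ops (Fin (n + 1) → ℂ) where
  K := (Matrix.diagonal fun i : Fin (n + 1) => qc r (wt r (aln r l n) (i : ℕ))).mulVecLin
  Kinv := (Matrix.diagonal fun i : Fin (n + 1) => qc r (-wt r (aln r l n) (i : ℕ))).mulVecLin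
  H := (Matrix.diagonal fun i : Fin (n + 1) => wt r (aln r l n) (i : ℕ)).mulVecLin
  E := (Matrix.of fun i j : Fin (n + 1) =>
    if (j : ℕ) = (i : ℕ) + 1 then cE r (aln r l n) (j : ℕ) else 0).mulVecLin
  F := (Matrix.of fun i j : Fin (n + 1) =>
    if (i : ℕ) = (j : ℕ) + 1 then (1 : ℂ) else 0).mulVecLin

/-- `α ∈ (ℂ∖ℤ) ∪ rℤ`. -/
def goodα (r : ℕ) (α : ℂ) : Prop := (¬∃ n : ℤ, α = (n : ℂ)) ∨ ∃ m : ℤ, α = (r : ℂ) * m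

/-- The tensor product `Ū`-module structure induced by the coproduct `Δ`. -/
def tensorOps (A : Ops V) (B : Ops W) : Ops (V ⊗[ℂ] W) where
  K := TensorProduct.map A.K B.K
  Kinv := TensorProduct.map A.Kinv B.Kinv
  H := TensorProduct.map A.H (LinearMap.id : W →ₗ[ℂ] W) +
    TensorProduct.map (LinearMap.id : V →ₗ[ℂ] V) B.H
  E := TensorProduct.map (LinearMap.id : V →ₗ[ℂ] V) B.E + TensorProduct.map A.E B.K
  F := TensorProduct.map A.F (LinearMap.id : W →ₗ[ℂ] W) + TensorProduct.map A.Kinv B.F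

/-- The operator `Σ_{l=0}^{r-1} ({1}^{2l}/{l}!) q^{l(l-1)/2} E^l ⊗ F^l` on `V ⊗ W`. -/
def braidSum (r : ℕ) (A : Ops V) (B : Ops W) : Module.End ℂ (V ⊗[ℂ] W) :=
  ∑ l ∈ Finset.range r,
    (qbrk r 1 ^ (2 * l) / qbrkFact r l * qc r ((l : ℂ) * ((l : ℂ) - 1) / 2)) •
      TensorProduct.map (A.E ^ l) (B.F ^ l)

/-- The defining property of the operator `q^{H⊗H/2}` on `V ⊗ W`: it multiplies
`v ⊗ w` by `q^{λμ/2}` for weight vectors `v, w` of weights `λ, μ`. -/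
def IsqHH (r : ℕ) (A : Ops V) (B : Ops W) (Q : Module.End ℂ (V ⊗[ℂ] W)) : Prop :=
  ∀ (lam mu : ℂ) (v : V) (w : W),
    v ∈ Module.End.eigenspace A.H lam → w ∈ Module.End.eigenspace B.H mu →
      Q (v ⊗ₜ[ℂ] w) = qc r (lam * mu / 2) • (v ⊗ₜ[ℂ] w)

/-- The braiding `c_{V,W} = τ ∘ q^{H⊗H/2} ∘ Σ_l ({1}^{2l}/{l}!) q^{l(l-1)/2} E^l ⊗ F^l`,
where `Q` is the operator `q^{H⊗H/2}`. -/
def braidMap (r : ℕ) (A : Ops V) (B : Ops W) (Q : Module.End ℂ (V ⊗[ℂ] W)) :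
    V ⊗[ℂ] W →ₗ[ℂ] W ⊗[ℂ] V :=
  (TensorProduct.comm ℂ V W).toLinearMap ∘ₗ Q ∘ₗ braidSum r A B

/-- The direct sum `Ū`-module structure on a product. -/
def piOps {ι : Type} {Vf : ι → Type} [∀ i, AddCommGroup (Vf i)] [∀ i, Module ℂ (Vf i)]
    (A : ∀ i, Ops (Vf i)) : Ops (∀ i, Vf i) where
  K := LinearMap.pi fun i => (A i).K ∘ₗ LinearMap.proj i
  Kinv := LinearMap.pi fun i => (A i).Kinv ∘ₗ LinearMap.proj i
  H := LinearMap.pi fun i => (A i).H ∘ₗ LinearMap.proj i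
  E := LinearMap.pi fun i => (A i).E ∘ₗ LinearMap.proj i
  F := LinearMap.pi fun i => (A i).F ∘ₗ LinearMap.proj i

section helpers

lemma qc_add (r : ℕ) (a b : ℂ) : qc r (a + b) = qc r a * qc r b := by
  unfold qc; rw [← Complex.exp_add]; congr 1; ring

lemma qc_ne (r : ℕ) (a : ℂ) : qc r a ≠ 0 := Complex.exp_ne_zero _

lemma qc_zero (r : ℕ) : qc r 0 = 1 := by simp [qc]

lemma qc_neg (r : ℕ) (a : ℂ) : qc r (-a) = (qc r a)⁻¹ := by
  unfold qc; rw [← Complex.exp_neg]; congr 1; ring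

lemma qc_sub (r : ℕ) (a b : ℂ) : qc r (a - b) = qc r a * (qc r b)⁻¹ := by
  rw [sub_eq_add_neg, qc_add, qc_neg]

lemma qc_self (r : ℕ) (hr : 2 ≤ r) : qc r r = -1 := by
  have : (r : ℂ) ≠ 0 := by norm_cast; omega
  unfold qc
  rw [mul_div_assoc, div_self this, mul_one, Complex.exp_pi_mul_I]

lemma qbrk_ne (r : ℕ) (hr : 2 ≤ r) (z : ℂ) (hz : ¬∃ m : ℤ, z = m * r) : qbrk r z ≠ 0 := by
  have hr0 : (r : ℂ) ≠ 0 := by norm_cast; omega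
  intro h
  unfold qbrk qc at h
  rw [sub_eq_zero, Complex.exp_eq_exp_iff_exists_int] at h
  obtain ⟨n, hn⟩ := h
  apply hz
  refine ⟨n, ?_⟩
  have hpi : (2 * Real.pi * Complex.I : ℂ) ≠ 0 := by
    simp [Real.pi_ne_zero]
  apply mul_left_cancel₀ hpi
  field_simp at hn
  linear_combination (Real.pi * Complex.I : ℂ) * hn

lemma qbrk_nat_ne (r : ℕ) (hr : 2 ≤ r) (j : ℕ) (h1 : 1 ≤ j) (h2 : j < r) :
    qbrk r j ≠ 0 := by
  apply qbrk_ne r hr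
  rintro ⟨m, hm⟩
  have hm' : (j : ℤ) = m * r := by exact_mod_cast hm
  have hd : (r : ℤ) ∣ j := ⟨m, by rw [hm']; ring⟩
  have := Nat.le_of_dvd (by omega) (Int.natCast_dvd_natCast.mp hd)
  omega

lemma qbrk_one_ne (r : ℕ) (hr : 2 ≤ r) : qbrk r 1 ≠ 0 := by
  have := qbrk_nat_ne r hr 1 le_rfl (by omega)
  simpa using this

lemma cE_ne (r : ℕ) (hr : 2 ≤ r) (α : ℂ) (hα : ¬∃ m : ℤ, α = m) (j : ℕ) (h1 : 1 ≤ j)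
    (h2 : j < r) : cE r α j ≠ 0 := by
  unfold cE
  refine div_ne_zero (mul_ne_zero (qbrk_nat_ne r hr j h1 h2) ?_)
    (pow_ne_zero _ (qbrk_one_ne r hr))
  apply qbrk_ne r hr
  rintro ⟨m, hm⟩
  exact hα ⟨j - m * r, by push_cast; linear_combination -hm⟩

lemma cE_zero (r : ℕ) (α : ℂ) : cE r α 0 = 0 := by
  simp [cE, qbrk]

lemma cE_self (r : ℕ) (hr : 2 ≤ r) (α : ℂ) : cE r α r = 0 := by
  simp [cE, qbrk, qc_neg, qc_self r hr]

lemma cE_succ (r : ℕ) (hr : 2 ≤ r) (α : ℂ) (j : ℕ) :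
    cE r α (j + 1) - cE r α j =
      (qbrk r 1)⁻¹ * (qc r (wt r α j) - qc r (-wt r α j)) := by
  have h1 := qbrk_one_ne r hr
  have key : qbrk r ((j : ℂ) + 1) * qbrk r ((j : ℂ) + 1 - α) - qbrk r j * qbrk r ((j : ℂ) - α)
      = qbrk r 1 * (qc r (wt r α j) - qc r (-wt r α j)) := by
    have e : wt r α j = r + (α - 1 - (j + j)) := by unfold wt; ring
    rw [e]
    unfold qbrk
    simp only [qc_neg, qc_sub, qc_add, qc_self r hr]
    have a1 := qc_ne r 1
    have a2 := qc_ne r j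
    have a3 := qc_ne r α
    field_simp
    ring
  unfold cE
  push_cast
  rw [← sub_div, key]
  field_simp

/-- coordinate functional -/
def co (r k : ℕ) : (Fin r → ℂ) →ₗ[ℂ] ℂ :=
  if h : k < r then LinearMap.proj ⟨k, h⟩ else 0

lemma co_lt {r k : ℕ} (h : k < r) (x : Fin r → ℂ) : co r k x = x ⟨k, h⟩ := by
  simp [co, h]

lemma co_ge {r k : ℕ} (h : r ≤ k) (x : Fin r → ℂ) : co r k x = 0 := by
  simp [co, not_lt.mpr h]

lemma co_ext {r : ℕ} {x y : Fin r → ℂ} (h : ∀ k, k < r → co r k x = co r k y) : x = y := by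
  funext i
  have := h i i.2
  rwa [co_lt i.2, co_lt i.2] at this

lemma co_K (r : ℕ) (α : ℂ) (k : ℕ) (x : Fin r → ℂ) :
    co r k ((vermaOps r α).K x) = qc r (wt r α k) * co r k x := by
  by_cases h : k < r
  · simp [co_lt h, vermaOps, Matrix.mulVec_diagonal]
  · simp [co_ge (not_lt.mp h)]

lemma co_Kinv (r : ℕ) (α : ℂ) (k : ℕ) (x : Fin r → ℂ) :
    co r k ((vermaOps r α).Kinv x) = qc r (-wt r α k) * co r k x := by
  by_cases h : k < r
  · simp [co_lt h, vermaOps, Matrix.mulVec_diagonal]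
  · simp [co_ge (not_lt.mp h)]

lemma co_H (r : ℕ) (α : ℂ) (k : ℕ) (x : Fin r → ℂ) :
    co r k ((vermaOps r α).H x) = wt r α k * co r k x := by
  by_cases h : k < r
  · simp [co_lt h, vermaOps, Matrix.mulVec_diagonal]
  · simp [co_ge (not_lt.mp h)]

lemma co_E (r : ℕ) (hr : 2 ≤ r) (α : ℂ) (k : ℕ) (x : Fin r → ℂ) :
    co r k ((vermaOps r α).E x) = cE r α (k + 1) * co r (k + 1) x := by
  by_cases h : k < r
  · rw [co_lt h]
    simp only [vermaOps, Matrix.mulVecLin_apply, Matrix.mulVec, dotProduct, Matrix.of_apply]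
    by_cases h' : k + 1 < r
    · rw [co_lt h', Finset.sum_eq_single (⟨k + 1, h'⟩ : Fin r)]
      · simp
      · intro b _ hb
        rw [if_neg, zero_mul]
        intro hh
        exact hb (Fin.ext hh)
      · simp
    · rw [co_ge (not_lt.mp h'), mul_zero]
      apply Finset.sum_eq_zero
      intro b _
      rw [if_neg, zero_mul]
      have := b.2
      omega
  · rw [co_ge (not_lt.mp h), co_ge (by omega), mul_zero]

lemma co_F_zero (r : ℕ) (α : ℂ) (x : Fin r → ℂ) :
    co r 0 ((vermaOps r α).F x) = 0 := by
  by_cases h : 0 < r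
  · rw [co_lt h]
    simp only [vermaOps, Matrix.mulVecLin_apply, Matrix.mulVec, dotProduct, Matrix.of_apply]
    apply Finset.sum_eq_zero
    intro b _
    rw [if_neg, zero_mul]
    simp
  · simp [co_ge (not_lt.mp h)]

lemma co_F_succ (r : ℕ) (α : ℂ) (k : ℕ) (hk : k + 1 < r) (x : Fin r → ℂ) :
    co r (k + 1) ((vermaOps r α).F x) = co r k x := by
  have hk' : k < r := by omega
  rw [co_lt hk, co_lt hk']
  simp only [vermaOps, Matrix.mulVecLin_apply, Matrix.mulVec, dotProduct, Matrix.of_apply]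
  rw [Finset.sum_eq_single (⟨k, hk'⟩ : Fin r)]
  · simp
  · intro b _ hb
    rw [if_neg, zero_mul]
    intro hh
    apply hb
    apply Fin.ext
    simp only at hh ⊢
    omega
  · simp

/-- basis vectors -/
def vb (r k : ℕ) : Fin r → ℂ := fun i => if (i : ℕ) = k then 1 else 0

lemma co_vb (r k l : ℕ) (hk : k < r) : co r l (vb r k) = if l = k then 1 else 0 := by
  by_cases h : l < r
  · simp [co_lt h, vb]
  · rw [co_ge (not_lt.mp h), if_neg (by omega)]

lemma verma_EF (r : ℕ) (hr : 2 ≤ r) (α : ℂ) (x : Fin r → ℂ) :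
    (vermaOps r α).E ((vermaOps r α).F x) = (vermaOps r α).F ((vermaOps r α).E x) +
      (qbrk r 1)⁻¹ • ((vermaOps r α).K x - (vermaOps r α).Kinv x) := by
  apply co_ext
  intro k hk
  simp only [map_add, map_smul, map_sub, co_E r hr, co_K, co_Kinv, smul_eq_mul]
  have h := cE_succ r hr α k
  have e1 : cE r α (k + 1) * co r (k + 1) ((vermaOps r α).F x) =
      cE r α (k + 1) * co r k x := by
    by_cases hk1 : k + 1 < r
    · rw [co_F_succ r α k hk1]
    · have : k + 1 = r := by omega
      rw [this, cE_self r hr]; simp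
  have e2 : co r k ((vermaOps r α).F ((vermaOps r α).E x)) = cE r α k * co r k x := by
    rcases k with _ | k
    · rw [co_F_zero, cE_zero, zero_mul]
    · rw [co_F_succ r α k hk, co_E r hr]
  rw [e1, e2]
  linear_combination (co r k x) * h

lemma verma_HF (r : ℕ) (α : ℂ) (x : Fin r → ℂ) :
    (vermaOps r α).H ((vermaOps r α).F x) = (vermaOps r α).F ((vermaOps r α).H x) +
      (-2 : ℂ) • (vermaOps r α).F x := by
  apply co_ext
  intro k hk
  simp only [map_add, map_smul, co_H, smul_eq_mul]
  rcases k with _ | k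
  · simp [co_F_zero]
  · simp only [co_F_succ r α k hk, co_H, wt]
    push_cast; ring

lemma verma_KF (r : ℕ) (α : ℂ) (x : Fin r → ℂ) :
    (vermaOps r α).K ((vermaOps r α).F x) =
      qc r (-2) • (vermaOps r α).F ((vermaOps r α).K x) := by
  apply co_ext
  intro k hk
  simp only [map_smul, co_K, smul_eq_mul]
  rcases k with _ | k
  · simp [co_F_zero]
  · simp only [co_F_succ r α k hk, co_K]
    rw [← mul_assoc, ← qc_add]
    congr 2; unfold wt; push_cast; ring

lemma verma_EKinv (r : ℕ) (hr : 2 ≤ r) (α : ℂ) (x : Fin r → ℂ) :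
    (vermaOps r α).Kinv ((vermaOps r α).E x) =
      qc r (-2) • (vermaOps r α).E ((vermaOps r α).Kinv x) := by
  apply co_ext
  intro k hk
  simp only [map_smul, co_Kinv, smul_eq_mul, co_E r hr]
  have : qc r (-wt r α k) = qc r (-2) * qc r (-wt r α (k + 1)) := by
    rw [← qc_add]; congr 1; unfold wt; push_cast; ring
  rw [this]; ring

lemma verma_Epow (r : ℕ) (hr : 2 ≤ r) (α : ℂ) (n : ℕ) : ∀ (k : ℕ) (x : Fin r → ℂ), r ≤ k + n →
    co r k (((vermaOps r α).E ^ n) x) = 0 := by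
  induction n with
  | zero => intro k x h; exact co_ge (by omega) _
  | succ n ih =>
    intro k x h
    rw [pow_succ', Module.End.mul_apply, co_E r hr, ih _ _ (by omega), mul_zero]

lemma exists_ker {T : Type} [AddCommGroup T] [Module ℂ T] (f : Module.End ℂ T) (r : ℕ)
    (hf : ∀ x, (f ^ r) x = 0) (p : Submodule ℂ T) (hp : ∀ v ∈ p, f v ∈ p) (hne : p ≠ ⊥) :
    ∃ x ∈ p, x ≠ 0 ∧ f x = 0 := by
  obtain ⟨y, hy, hy0⟩ := Submodule.exists_mem_ne_zero_of_ne_bot hne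
  have : ∀ n, ∀ y ∈ p, y ≠ 0 → (f ^ n) y = 0 → ∃ x ∈ p, x ≠ 0 ∧ f x = 0 := by
    intro n
    induction n with
    | zero => intro y _ h0 h; exact absurd h h0
    | succ n ih =>
      intro y hy h0 h
      by_cases hfy : f y = 0
      · exact ⟨y, hy, h0, hfy⟩
      · exact ih (f y) (hp y hy) hfy (by rwa [pow_succ, Module.End.mul_apply] at h)
  exact this r y hy hy0 (hf y)

lemma verma_ker (r : ℕ) (hr : 2 ≤ r) (α : ℂ) (hα : ¬∃ m : ℤ, α = m) (x : Fin r → ℂ)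
    (hx : (vermaOps r α).E x = 0) (k : ℕ) : co r (k + 1) x = 0 := by
  by_cases h : k + 1 < r
  · have := co_E r hr α k x
    rw [hx, map_zero] at this
    exact (mul_eq_zero.mp this.symm).resolve_left (cE_ne r hr α hα _ (by omega) h)
  · exact co_ge (not_lt.mp h) _

lemma verma_simple (r : ℕ) (hr : 2 ≤ r) (α : ℂ) (hα : ¬∃ m : ℤ, α = m) :
    (vermaOps r α).IsSimple := by
  have hr0 : 0 < r := by omega
  refine ⟨⟨vb r 0, ?_⟩, ?_⟩
  · intro h
    have := co_vb r 0 0 hr0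
    simp [h] at this
  · intro p hp
    by_cases hb : p = ⊥
    · exact Or.inl hb
    right
    obtain ⟨x, hxp, hx0, hEx⟩ := exists_ker (vermaOps r α).E r
      (fun x => co_ext fun k _ => by rw [verma_Epow r hr α r k x (by omega), map_zero])
      p hp.2.2.2.1 hb
    have hx : x = co r 0 x • vb r 0 := by
      apply co_ext
      intro k hk
      rw [map_smul, co_vb r 0 k hr0]
      rcases k with _ | k
      · simp
      · simp [verma_ker r hr α hα x hEx k]
    have hc : co r 0 x ≠ 0 := by
      intro h; rw [h, zero_smul] at hx; exact hx0 hx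
    have hv : ∀ k, k < r → vb r k ∈ p := by
      intro k
      induction k with
      | zero =>
        intro _
        rw [hx] at hxp
        exact (Submodule.smul_mem_iff p hc).mp hxp
      | succ k ih =>
        intro hk
        have := hp.2.2.2.2 _ (ih (by omega))
        convert this using 1
        apply co_ext
        intro l hl
        rw [co_vb r _ _ hk]
        rcases l with _ | l
        · simp [co_F_zero]
        · rw [co_F_succ r α l hl, co_vb r _ _ (by omega)]; simp
    rw [eq_top_iff]
    intro y _
    have : y = ∑ i : Fin r, y i • vb r i := by
      funext j
      simp [vb, Finset.sum_apply, Fin.val_inj]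
    rw [this]
    exact Submodule.sum_mem _ fun i _ => p.smul_mem _ (hv i i.2)

/-- map from Verma module determined by a vector -/
def hwMap {T : Type} [AddCommGroup T] [Module ℂ T] (r : ℕ) (A : Ops T) (w : T) :
    (Fin r → ℂ) →ₗ[ℂ] T :=
  ∑ j ∈ Finset.range r, (co r j).smulRight ((A.F ^ j) w)

lemma hwMap_apply {T : Type} [AddCommGroup T] [Module ℂ T] (r : ℕ) (A : Ops T) (w : T)
    (x : Fin r → ℂ) :
    hwMap r A w x = ∑ j ∈ Finset.range r, co r j x • (A.F ^ j) w := by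
  simp [hwMap, LinearMap.sum_apply]

section hw
variable {T : Type} [AddCommGroup T] [Module ℂ T]

lemma hw_H (r : ℕ) (A : Ops T) (α : ℂ)
    (hHF : ∀ x, A.H (A.F x) = A.F (A.H x) + (-2 : ℂ) • A.F x) (w : T)
    (hHw : A.H w = wt r α 0 • w) (j : ℕ) : A.H ((A.F ^ j) w) = wt r α j • (A.F ^ j) w := by
  induction j with
  | zero => simpa using hHw
  | succ j ih =>
    rw [pow_succ', Module.End.mul_apply, hHF, ih, map_smul, ← add_smul]
    congr 1; unfold wt; push_cast; ring

lemma hw_E (r : ℕ) (hr : 2 ≤ r) (A : Ops T) (α : ℂ)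
    (hHF : ∀ x, A.H (A.F x) = A.F (A.H x) + (-2 : ℂ) • A.F x)
    (hEF : ∀ x, A.E (A.F x) = A.F (A.E x) + (qbrk r 1)⁻¹ • (A.K x - A.Kinv x))
    (hK : ∀ x μ, A.H x = μ • x → A.K x = qc r μ • x)
    (hKi : ∀ x μ, A.H x = μ • x → A.Kinv x = qc r (-μ) • x)
    (w : T) (hHw : A.H w = wt r α 0 • w) (hEw : A.E w = 0) (j : ℕ) :
    A.E ((A.F ^ (j + 1)) w) = cE r α (j + 1) • (A.F ^ j) w := by
  have hs : ∀ j, A.F (A.E ((A.F ^ j) w)) = cE r α j • (A.F ^ j) w →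
      A.E ((A.F ^ (j + 1)) w) = cE r α (j + 1) • (A.F ^ j) w := by
    intro j h
    have hH := hw_H r A α hHF w hHw j
    rw [pow_succ', Module.End.mul_apply, hEF, h, hK _ _ hH, hKi _ _ hH, ← sub_smul, smul_smul,
      ← add_smul]
    congr 1
    linear_combination -cE_succ r hr α j
  induction j with
  | zero => apply hs; simp [hEw, cE_zero]
  | succ j ih => apply hs; rw [ih, map_smul, pow_succ', Module.End.mul_apply]

lemma hwMap_equiv (r : ℕ) (hr : 2 ≤ r) (A : Ops T) (α : ℂ)
    (hHF : ∀ x, A.H (A.F x) = A.F (A.H x) + (-2 : ℂ) • A.F x)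
    (hEF : ∀ x, A.E (A.F x) = A.F (A.E x) + (qbrk r 1)⁻¹ • (A.K x - A.Kinv x))
    (hK : ∀ x μ, A.H x = μ • x → A.K x = qc r μ • x)
    (hKi : ∀ x μ, A.H x = μ • x → A.Kinv x = qc r (-μ) • x)
    (w : T) (hHw : A.H w = wt r α 0 • w) (hEw : A.E w = 0) (hFw : (A.F ^ r) w = 0) :
    IsEquivariant (vermaOps r α) A (hwMap r A w) := by
  have hH := hw_H r A α hHF w hHw
  refine ⟨fun x => ?_, fun x => ?_, fun x => ?_, fun x => ?_, fun x => ?_⟩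
  · simp only [hwMap_apply, map_sum, map_smul, co_K]
    refine Finset.sum_congr rfl fun j _ => ?_
    rw [hK _ _ (hH j), smul_smul, mul_comm]
  · simp only [hwMap_apply, map_sum, map_smul, co_Kinv]
    refine Finset.sum_congr rfl fun j _ => ?_
    rw [hKi _ _ (hH j), smul_smul, mul_comm]
  · simp only [hwMap_apply, map_sum, map_smul, co_H]
    refine Finset.sum_congr rfl fun j _ => ?_
    rw [hH j, smul_smul, mul_comm]
  · simp only [hwMap_apply, map_sum, map_smul, co_E r hr]
    obtain ⟨s, rfl⟩ : ∃ s, r = s + 1 := ⟨r - 1, by omega⟩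
    rw [Finset.sum_range_succ, Finset.sum_range_succ', co_ge le_rfl]
    simp only [pow_zero, Module.End.one_apply, hEw, mul_zero, zero_smul, smul_zero]
    congr 1
    refine Finset.sum_congr rfl fun j _ => ?_
    rw [hw_E (s + 1) hr A α hHF hEF hK hKi w hHw hEw, smul_smul, mul_comm]
  · simp only [hwMap_apply, map_sum, map_smul]
    obtain ⟨s, rfl⟩ : ∃ s, r = s + 1 := ⟨r - 1, by omega⟩
    rw [Finset.sum_range_succ', Finset.sum_range_succ, co_F_zero]
    simp only [← Module.End.mul_apply, ← pow_succ', hFw, zero_smul, smul_zero]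
    congr 1
    refine Finset.sum_congr rfl fun j hj => ?_
    rw [co_F_succ _ _ _ (by simpa using hj)]

end hw

/-- coordinates on the tensor product -/
def cc (r k l : ℕ) : ((Fin r → ℂ) ⊗[ℂ] (Fin r → ℂ)) →ₗ[ℂ] ℂ :=
  LinearMap.mul' ℂ ℂ ∘ₗ TensorProduct.map (co r k) (co r l)

lemma cc_tmul (r k l : ℕ) (x y : Fin r → ℂ) : cc r k l (x ⊗ₜ[ℂ] y) = co r k x * co r l y := by
  simp [cc]

lemma cc_ge {r k l : ℕ} (h : r ≤ k ∨ r ≤ l) (x : (Fin r → ℂ) ⊗[ℂ] (Fin r → ℂ)) :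
    cc r k l x = 0 := by
  induction x with
  | zero => simp
  | add x y hx hy => simp [hx, hy]
  | tmul x y =>
    rw [cc_tmul]
    rcases h with h | h
    · rw [co_ge h, zero_mul]
    · rw [co_ge h, mul_zero]

lemma cc_ext {r : ℕ} {x y : (Fin r → ℂ) ⊗[ℂ] (Fin r → ℂ)}
    (h : ∀ k l, cc r k l x = cc r k l y) : x = y := by
  let b := (Pi.basisFun ℂ (Fin r)).tensorProduct (Pi.basisFun ℂ (Fin r))
  have hb : ∀ (i j : Fin r) z, b.repr z (i, j) = cc r i j z := by
    intro i j z
    induction z with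
    | zero => simp
    | add x y hx hy => simp [hx, hy]
    | tmul x y =>
      rw [cc_tmul, co_lt i.2, co_lt j.2]
      simp [b, Module.Basis.tensorProduct_repr_tmul_apply, mul_comm]
  apply b.ext_elem
  rintro ⟨i, j⟩
  rw [hb, hb, h]

/-- tensor square -/
abbrev TT (r : ℕ) (η : ℂ) : Ops ((Fin r → ℂ) ⊗[ℂ] (Fin r → ℂ)) :=
  tensorOps (vermaOps r η) (vermaOps r η)

lemma TT_HF (r : ℕ) (η : ℂ) (x) : (TT r η).H ((TT r η).F x) =
    (TT r η).F ((TT r η).H x) + (-2 : ℂ) • (TT r η).F x := by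
  have hKH : ∀ v, (vermaOps r η).H ((vermaOps r η).Kinv v) =
      (vermaOps r η).Kinv ((vermaOps r η).H v) := by
    intro v; apply co_ext; intro k _; simp only [co_H, co_Kinv]; ring
  induction x with
  | zero => simp
  | add x y hx hy => simp only [map_add, hx, hy, smul_add]; abel
  | tmul x y =>
    simp only [TT, tensorOps, LinearMap.add_apply, TensorProduct.map_tmul, LinearMap.id_apply,
      map_add, verma_HF, hKH, TensorProduct.add_tmul, TensorProduct.tmul_add,
      TensorProduct.smul_tmul', TensorProduct.tmul_smul, smul_add]
    abel

lemma TT_EF (r : ℕ) (hr : 2 ≤ r) (η : ℂ) (x) : (TT r η).E ((TT r η).F x) =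
    (TT r η).F ((TT r η).E x) + (qbrk r 1)⁻¹ • ((TT r η).K x - (TT r η).Kinv x) := by
  induction x with
  | zero => simp
  | add x y hx hy => simp only [map_add, hx, hy, smul_add, smul_sub]; abel
  | tmul x y =>
    simp only [TT, tensorOps, LinearMap.add_apply, TensorProduct.map_tmul, LinearMap.id_apply,
      map_add, verma_EF r hr, verma_KF, verma_EKinv r hr, TensorProduct.add_tmul,
      TensorProduct.tmul_add, ← TensorProduct.smul_tmul', TensorProduct.tmul_smul, smul_add,
      TensorProduct.sub_tmul, TensorProduct.tmul_sub, smul_sub]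
    abel

lemma cc_K (r : ℕ) (η : ℂ) (k l : ℕ) (x) :
    cc r k l ((TT r η).K x) = qc r (wt r η k + wt r η l) * cc r k l x := by
  induction x with
  | zero => simp
  | add x y hx hy => simp only [map_add, hx, hy]; ring
  | tmul x y =>
    simp only [TT, tensorOps, TensorProduct.map_tmul, cc_tmul, co_K, qc_add]; ring

lemma cc_Kinv (r : ℕ) (η : ℂ) (k l : ℕ) (x) :
    cc r k l ((TT r η).Kinv x) = qc r (-(wt r η k + wt r η l)) * cc r k l x := by
  induction x with
  | zero => simp
  | add x y hx hy => simp only [map_add, hx, hy]; ring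
  | tmul x y =>
    simp only [TT, tensorOps, TensorProduct.map_tmul, cc_tmul, co_Kinv, neg_add, qc_add]; ring

lemma cc_H (r : ℕ) (η : ℂ) (k l : ℕ) (x) :
    cc r k l ((TT r η).H x) = (wt r η k + wt r η l) * cc r k l x := by
  induction x with
  | zero => simp
  | add x y hx hy => simp only [map_add, hx, hy]; ring
  | tmul x y =>
    simp only [TT, tensorOps, TensorProduct.map_tmul, cc_tmul, co_H, LinearMap.add_apply,
      LinearMap.id_apply, map_add]; ring

lemma cc_E (r : ℕ) (hr : 2 ≤ r) (η : ℂ) (k l : ℕ) (x) :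
    cc r k l ((TT r η).E x) = cE r η (l + 1) * cc r k (l + 1) x +
      cE r η (k + 1) * qc r (wt r η l) * cc r (k + 1) l x := by
  induction x with
  | zero => simp
  | add x y hx hy => simp only [map_add, hx, hy]; ring
  | tmul x y =>
    simp only [TT, tensorOps, TensorProduct.map_tmul, cc_tmul, co_E r hr, co_K,
      LinearMap.add_apply, LinearMap.id_apply, map_add]; ring

lemma cc_eigen (r : ℕ) (η μ : ℂ) (x) (hx : (TT r η).H x = μ • x) (k l : ℕ) :
    wt r η k + wt r η l = μ ∨ cc r k l x = 0 := by
  have := cc_H r η k l x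
  rw [hx, map_smul, smul_eq_mul] at this
  have h : (wt r η k + wt r η l - μ) * cc r k l x = 0 := by linear_combination -this
  rcases mul_eq_zero.mp h with h | h
  · left; linear_combination h
  · right; exact h

lemma TT_K (r : ℕ) (η : ℂ) (x) (μ : ℂ) (hx : (TT r η).H x = μ • x) :
    (TT r η).K x = qc r μ • x := by
  apply cc_ext
  intro k l
  rw [cc_K, map_smul, smul_eq_mul]
  rcases cc_eigen r η μ x hx k l with h | h <;> simp [h]

lemma TT_Kinv (r : ℕ) (η : ℂ) (x) (μ : ℂ) (hx : (TT r η).H x = μ • x) :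
    (TT r η).Kinv x = qc r (-μ) • x := by
  apply cc_ext
  intro k l
  rw [cc_Kinv, map_smul, smul_eq_mul]
  rcases cc_eigen r η μ x hx k l with h | h
  · rw [h]
  · simp [h]

lemma TT_ker (r : ℕ) (hr : 2 ≤ r) (η : ℂ) (hη : ¬∃ m : ℤ, η = m) (x)
    (hx : (TT r η).E x = 0) (d : ℕ) : ∀ k l, k + d = r → r ≤ k + l → cc r k l x = 0 := by
  induction d with
  | zero => intro k l h1 _; exact cc_ge (Or.inl (by omega)) _
  | succ d ih =>
    intro k l h1 h2
    by_cases hl : l < r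
    · obtain ⟨m, rfl⟩ : ∃ m, l = m + 1 := ⟨l - 1, by omega⟩
      have h := cc_E r hr η k m x
      rw [hx, map_zero, ih (k + 1) m (by omega) (by omega), mul_zero, add_zero] at h
      exact (mul_eq_zero.mp h.symm).resolve_left (cE_ne r hr η hη _ (by omega) hl)
    · exact cc_ge (Or.inr (by omega)) _

/-- coefficients of the highest weight vector -/
def aco (r : ℕ) (η : ℂ) (n : ℕ) : ℕ → ℂ
  | 0 => 1
  | k + 1 => -(aco r η n k * cE r η (n - k)) / (cE r η (k + 1) * qc r (wt r η (n - k - 1)))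

/-- highest weight vector -/
def hv (r : ℕ) (η : ℂ) (n : ℕ) : (Fin r → ℂ) ⊗[ℂ] (Fin r → ℂ) :=
  ∑ k ∈ Finset.range (n + 1), aco r η n k • (vb r k ⊗ₜ[ℂ] vb r (n - k))

lemma cc_hv (r : ℕ) (η : ℂ) (n : ℕ) (hn : n < r) (k l : ℕ) :
    cc r k l (hv r η n) = if k + l = n then aco r η n k else 0 := by
  unfold hv
  simp only [map_sum, map_smul, cc_tmul, smul_eq_mul]
  have : ∀ j ∈ Finset.range (n + 1), aco r η n j * (co r k (vb r j) * co r l (vb r (n - j))) =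
      if j = k then (if k + l = n then aco r η n k else 0) else 0 := by
    intro j hj
    have hj' : j < n + 1 := by simpa using hj
    rw [co_vb r _ _ (by omega), co_vb r _ _ (by omega)]
    by_cases h : k = j
    · subst h
      by_cases h2 : k + l = n
      · have : l = n - k := by omega
        rw [if_pos rfl, if_pos this, if_pos rfl, if_pos h2]; ring
      · have : ¬ l = n - k := by omega
        simp [h2, this]
    · simp [h, Ne.symm h]
  rw [Finset.sum_congr rfl this, Finset.sum_ite_eq']
  split_ifs with h1 h2 <;> first | rfl | skip
  simp at h1; omega

lemma hv_E (r : ℕ) (hr : 2 ≤ r) (η : ℂ) (hη : ¬∃ m : ℤ, η = m) (n : ℕ) (hn : n < r) :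
    (TT r η).E (hv r η n) = 0 := by
  apply cc_ext
  intro k l
  rw [cc_E r hr, cc_hv r η n hn, cc_hv r η n hn, map_zero]
  by_cases h : k + (l + 1) = n
  · rw [if_pos h, if_pos (by omega)]
    have e1 : n - k = l + 1 := by omega
    have h1 := cE_ne r hr η hη (k + 1) (by omega) (by omega)
    have h2 := qc_ne r (wt r η l)
    simp only [aco, e1, Nat.add_sub_cancel]
    field_simp
    ring
  · rw [if_neg h, if_neg (by omega)]; simp

lemma hv_H (r : ℕ) (η : ℂ) (n : ℕ) (hn : n < r) (μ : ℂ) (hμ : μ = 2 * η + 2 * r - 2 - 2 * n) :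
    (TT r η).H (hv r η n) = μ • hv r η n := by
  apply cc_ext
  intro k l
  rw [cc_H, map_smul, smul_eq_mul, cc_hv r η n hn]
  split_ifs with h
  · rw [hμ, ← h]; unfold wt; push_cast; ring
  · simp

lemma hv_F (r : ℕ) (hr : 2 ≤ r) (η : ℂ) (hη : ¬∃ m : ℤ, η = m) (n : ℕ) (hn : n < r) (α : ℂ)
    (hα : wt r α 0 = 2 * η + 2 * r - 2 - 2 * n) :
    ((TT r η).F ^ r) (hv r η n) = 0 := by
  have hHw := hv_H r η n hn _ hα
  have hE := hw_E r hr (TT r η) α (TT_HF r η) (TT_EF r hr η) (TT_K r η) (TT_Kinv r η)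
    (hv r η n) hHw (hv_E r hr η hη n hn) (r - 1)
  rw [show r - 1 + 1 = r by omega, cE_self r hr, zero_smul] at hE
  have hH := hw_H r (TT r η) α (TT_HF r η) (hv r η n) hHw r
  apply cc_ext
  intro k l
  rw [map_zero]
  rcases cc_eigen r η _ _ hH k l with h | h
  · have hkl : k + l = n + r := by
      have h' : ((k + l : ℕ) : ℂ) = ((n + r : ℕ) : ℂ) := by
        unfold wt at h hα
        push_cast at h hα ⊢
        linear_combination (-1 / 2) * h - (1 / 2) * hα
      exact_mod_cast h'
    by_cases hk : k < r
    · exact TT_ker r hr η hη _ hE (r - k) k l (by omega) (by omega)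
    · exact cc_ge (Or.inl (by omega)) _
  · exact h

end helpers

/-- For `η ∉ ½ℤ` there is an isomorphism of `Ū`-modules
`V_η ⊗ V_η ≅ ⊕_{i=0}^{r-1} V_{2η-r+2i+1}`, a direct sum of simple Verma modules
with pairwise distinct highest weights; in particular `V_η ⊗ V_η` is semisimple and
multiplicity free. -/
theorem stmt18 (r : ℕ) (hr : 2 ≤ r) (η : ℂ) (hη : ¬∃ k : ℤ, η = (k : ℂ) / 2) :
    (∀ i : Fin r, (vermaOps r (2 * η - (r : ℂ) + 2 * ((i : ℕ) : ℂ) + 1)).IsSimple) ∧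
      OpsIso (tensorOps (vermaOps r η) (vermaOps r η))
        (piOps fun i : Fin r => vermaOps r (2 * η - (r : ℂ) + 2 * ((i : ℕ) : ℂ) + 1)) := by
  have hr0 : 0 < r := by omega
  have hη' : ¬∃ m : ℤ, η = m := by
    rintro ⟨m, hm⟩
    exact hη ⟨2 * m, by rw [hm]; push_cast; ring⟩
  have hα : ∀ i : Fin r, ¬∃ m : ℤ, 2 * η - (r : ℂ) + 2 * ((i : ℕ) : ℂ) + 1 = m := by
    rintro i ⟨m, hm⟩
    exact hη ⟨m + r - 2 * (i : ℕ) - 1, by push_cast; linear_combination (1 / 2) * hm⟩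
  refine ⟨fun i => verma_simple r hr _ (hα i), ?_⟩
  have hn : ∀ i : Fin r, r - 1 - (i : ℕ) < r := fun i => by omega
  have hwt : ∀ i : Fin r, wt r (2 * η - (r : ℂ) + 2 * ((i : ℕ) : ℂ) + 1) 0 =
      2 * η + 2 * r - 2 - 2 * ((r - 1 - (i : ℕ) : ℕ) : ℂ) := by
    intro i
    have : ((r - 1 - (i : ℕ) : ℕ) : ℂ) = r - 1 - (i : ℕ) := by
      have := i.2
      rw [Nat.cast_sub (by omega), Nat.cast_sub (by omega)]; simp
    rw [this]; unfold wt; push_cast; ring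
  have heq : ∀ i : Fin r, IsEquivariant (vermaOps r (2 * η - (r : ℂ) + 2 * ((i : ℕ) : ℂ) + 1))
      (TT r η) (hwMap r (TT r η) (hv r η (r - 1 - (i : ℕ)))) := fun i =>
    hwMap_equiv r hr (TT r η) _ (TT_HF r η) (TT_EF r hr η) (TT_K r η) (TT_Kinv r η) _
      (hv_H r η _ (hn i) _ (hwt i)) (hv_E r hr η hη' _ (hn i))
      (hv_F r hr η hη' _ (hn i) _ (hwt i))
  let P := piOps fun i : Fin r => vermaOps r (2 * η - (r : ℂ) + 2 * ((i : ℕ) : ℂ) + 1)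
  let Φ : (Fin r → Fin r → ℂ) →ₗ[ℂ] ((Fin r → ℂ) ⊗[ℂ] (Fin r → ℂ)) :=
    ∑ i : Fin r, hwMap r (TT r η) (hv r η (r - 1 - (i : ℕ))) ∘ₗ LinearMap.proj i
  have hΦ : ∀ x, Φ x = ∑ i : Fin r, hwMap r (TT r η) (hv r η (r - 1 - (i : ℕ))) (x i) := by
    intro x; simp [Φ, LinearMap.sum_apply]
  have hΦe : IsEquivariant P (TT r η) Φ := by
    refine ⟨fun x => ?_, fun x => ?_, fun x => ?_, fun x => ?_, fun x => ?_⟩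
    · rw [hΦ, hΦ, map_sum]; exact Finset.sum_congr rfl fun i _ => (heq i).1 (x i)
    · rw [hΦ, hΦ, map_sum]; exact Finset.sum_congr rfl fun i _ => (heq i).2.1 (x i)
    · rw [hΦ, hΦ, map_sum]; exact Finset.sum_congr rfl fun i _ => (heq i).2.2.1 (x i)
    · rw [hΦ, hΦ, map_sum]; exact Finset.sum_congr rfl fun i _ => (heq i).2.2.2.1 (x i)
    · rw [hΦ, hΦ, map_sum]; exact Finset.sum_congr rfl fun i _ => (heq i).2.2.2.2 (x i)
  have hPE : ∀ (n : ℕ) (x : Fin r → Fin r → ℂ) (i : Fin r), (P.E ^ n) x i =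
      ((vermaOps r (2 * η - (r : ℂ) + 2 * ((i : ℕ) : ℂ) + 1)).E ^ n) (x i) := by
    intro n
    induction n with
    | zero => intro x i; rfl
    | succ n ih =>
      intro x i
      rw [pow_succ, pow_succ, Module.End.mul_apply, Module.End.mul_apply, ih]
      rfl
  have hinj : Function.Injective Φ := by
    rw [← LinearMap.ker_eq_bot]
    by_contra hne
    obtain ⟨x, hxk, hx0, hEx⟩ := exists_ker P.E r
      (fun x => by
        funext i
        rw [hPE]
        exact co_ext fun k _ => by
          rw [verma_Epow r hr _ r k _ (by omega)]; exact (map_zero _).symm)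
      (LinearMap.ker Φ)
      (fun v hv => by
        rw [LinearMap.mem_ker] at hv ⊢
        rw [hΦe.2.2.2.1, hv, map_zero]) hne
    rw [LinearMap.mem_ker, hΦ] at hxk
    have hco : ∀ i k, co r (k + 1) (x i) = 0 := fun i k =>
      verma_ker r hr _ (hα i) (x i) (congrFun hEx i) k
    have hval : ∀ i : Fin r, hwMap r (TT r η) (hv r η (r - 1 - (i : ℕ))) (x i) =
        co r 0 (x i) • hv r η (r - 1 - (i : ℕ)) := by
      intro i
      rw [hwMap_apply, Finset.sum_eq_single 0]
      · simp
      · intro k _ hk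
        obtain ⟨m, rfl⟩ := Nat.exists_eq_succ_of_ne_zero hk
        rw [Nat.succ_eq_add_one, hco, zero_smul]
      · intro h; simp at h; omega
    apply hx0
    funext i
    apply co_ext
    intro k hk
    rcases k with _ | k
    · have h := congrArg (cc r 0 (r - 1 - (i : ℕ))) hxk
      simp only [hval, map_sum, map_smul, smul_eq_mul, map_zero] at h
      rw [Finset.sum_eq_single i] at h
      · rw [cc_hv r η _ (hn i), if_pos (by omega)] at h
        simpa [aco] using h
      · intro j _ hj
        have : (j : ℕ) ≠ i := fun h => hj (Fin.ext h)
        rw [cc_hv r η _ (hn j), if_neg (by omega), mul_zero]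
      · simp
    · rw [hco]; exact (map_zero _).symm
  have hdim : Module.finrank ℂ (Fin r → Fin r → ℂ) =
      Module.finrank ℂ ((Fin r → ℂ) ⊗[ℂ] (Fin r → ℂ)) := by
    rw [Module.finrank_tensorProduct, Module.finrank_pi_fintype]
    simp
  let e := LinearEquiv.ofInjectiveOfFinrankEq Φ hinj hdim
  have he : ∀ x, e x = Φ x := fun x => rfl
  refine ⟨e.symm, ?_⟩
  refine ⟨fun v => ?_, fun v => ?_, fun v => ?_, fun v => ?_, fun v => ?_⟩ <;>
    obtain ⟨x, rfl⟩ := e.surjective v <;>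
    simp only [LinearEquiv.coe_coe, LinearEquiv.symm_apply_apply] <;>
    rw [LinearEquiv.symm_apply_eq, he, he]
  · exact (hΦe.1 x).symm
  · exact (hΦe.2.1 x).symm
  · exact (hΦe.2.2.1 x).symm
  · exact (hΦe.2.2.2.1 x).symm
  · exact (hΦe.2.2.2.2 x).symm

end Unrolled
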